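/- arXiv:2308.08439 — 3 statements merged into one kernel-verified Lean document; each statement's English description precedes it below -/
import Mathlib

section
/- There exist a real-valued function h ∈ L²(0, π), not a.e. zero, vanishing a.e. outside (2a₁ + a₂/2, π), and a real-valued function e₁ ∈ L²((a₁+a₂/2, π−a₁)), not a.e. zero, such that M(e₁)(x) = e₁(x) for a.e. x ∈ (a₁+a₂/2, π−a₁); that is, the operator M has eigenvalue 1 with eigenfunction e₁. -/
open MeasureTheory Real Set Filter

/-! On an interval `(p, q)` of length `L`, the quarter wave `e x = cos (π (x - p) / (2 L))`
satisfies `(π / (2 L)) ∫ₚ^{p+q-x} e = sin (π (q - x) / (2 L)) = e x`. With `p = a₁ + a₂ / 2` and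
`q = π - a₁`, the upper limit in `M` is `p + q - x` and the integral sees `h` only on
`(2 a₁ + a₂ / 2, π)`, so taking `h` to be the constant `π / (2 L)` there gives the fixed point. -/

theorem not_ae_eq_zero_of_forall_ne {α β : Type*} [Zero β] [MeasurableSpace α] {μ : Measure α}
    {f : α → β} {s : Set α} (hs : μ s ≠ 0) (hf : ∀ x ∈ s, f x ≠ 0) : ¬ ∀ᵐ x ∂μ, f x = 0 :=
  fun h ↦ hs (measure_mono_null hf (ae_iff.1 h))

theorem intervalIntegral_mul_eq_const_mul_of_eqOn_Ioo {𝕜 : Type*} [RCLike 𝕜] {μ : Measure ℝ}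
    [NullSingletonClass μ] {f g : ℝ → 𝕜} {u v : ℝ} {k : 𝕜} (huv : u ≤ v)
    (hg : EqOn g (fun _ ↦ k) (Ioo u v)) :
    ∫ t in u..v, f t * g t ∂μ = k * ∫ t in u..v, f t ∂μ := by
  rw [← intervalIntegral.integral_const_mul]
  refine intervalIntegral.integral_congr_Ioo_of_le huv fun t ht ↦ ?_
  simp only [hg ht, mul_comm]

/-- For `p < q`, the quarter wave descending from `1` at `p` to `0` at `q`; it is the
eigenfunction of `M` for `p = a₁ + a₂ / 2` and `q = π - a₁`. -/
noncomputable def quarterCosine (p q x : ℝ) : ℝ :=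
  cos (π / (2 * (q - p)) * (x - p))

theorem continuous_quarterCosine (p q : ℝ) : Continuous (quarterCosine p q) := by
  unfold quarterCosine
  fun_prop

theorem quarterCosine_pos {p q x : ℝ} (hx : x ∈ Ioo p q) : 0 < quarterCosine p q x := by
  have hxp : 0 < x - p := sub_pos.2 hx.1
  have hxq : x - p < q - p := sub_lt_sub_right hx.2 p
  have hqp : 0 < q - p := hxp.trans hxq
  have h_pos : 0 < π / (2 * (q - p)) * (x - p) := by positivity
  have h_lt : π / (2 * (q - p)) * (x - p) < π / 2 :=
    calc π / (2 * (q - p)) * (x - p) < π / (2 * (q - p)) * (q - p) := by gcongr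
      _ = π / 2 := by field_simp
  exact cos_pos_of_mem_Ioo ⟨by linarith [pi_pos], h_lt⟩

theorem memLp_quarterCosine (p q : ℝ) (r : ENNReal) (μ : Measure ℝ) [IsFiniteMeasure μ] :
    MemLp (quarterCosine p q) r μ :=
  .of_bound (continuous_quarterCosine p q).aestronglyMeasurable 1 <|
    .of_forall fun _ ↦ abs_cos_le_one _

theorem mul_integral_quarterCosine_reflect {p q : ℝ} (hpq : p ≠ q) (x : ℝ) :
    π / (2 * (q - p)) * ∫ t in p..(p + q - x), quarterCosine p q t = quarterCosine p q x := by
  have hqp : q - p ≠ 0 := sub_ne_zero.2 hpq.symm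
  calc π / (2 * (q - p)) * ∫ t in p..(p + q - x), quarterCosine p q t
      = sin (π / (2 * (q - p)) * (q - x)) := by
        simp only [quarterCosine, mul_sub, intervalIntegral.mul_integral_comp_mul_sub,
          integral_cos, sub_self, sin_zero, sub_zero]
        congr 1
        ring
    _ = sin (π / 2 - π / (2 * (q - p)) * (x - p)) := by
        congr 1
        field_simp
        ring
    _ = quarterCosine p q x := sin_pi_div_two_sub _

theorem integral_quarterCosine_mul_comp_eq_self {p q s x : ℝ} {h : ℝ → ℝ} (hx : x ∈ Ioo p q)
    (hh : EqOn h (fun _ ↦ π / (2 * (q - p))) (Ioo (2 * p - s) (p + q - s))) :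
    ∫ t in p..(p + q - x), quarterCosine p q t * h (t + x - s) = quarterCosine p q x := by
  have h_const : EqOn (fun t ↦ h (t + x - s)) (fun _ ↦ π / (2 * (q - p))) (Ioo p (p + q - x)) :=
    fun t ht ↦ hh ⟨by linarith [ht.1, hx.1], by linarith [ht.2]⟩
  rw [intervalIntegral_mul_eq_const_mul_of_eqOn_Ioo (by linarith [hx.2]) h_const,
    mul_integral_quarterCosine_reflect (hx.1.trans hx.2).ne]

theorem M_has_eigenvalue_one_general (a₁ a₂ b : ℝ) (hb : 0 < b) (hlt : 2 * a₁ + a₂ / 2 < b) :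
    ∃ h e₁ : ℝ → ℝ,
      MemLp h 2 (volume.restrict (Ioo 0 b)) ∧
      ¬ (∀ᵐ x ∂(volume.restrict (Ioo 0 b)), h x = 0) ∧
      (∀ᵐ x ∂(volume : Measure ℝ), x ∉ Ioo (2 * a₁ + a₂ / 2) b → h x = 0) ∧
      MemLp e₁ 2 (volume.restrict (Ioo (a₁ + a₂ / 2) (b - a₁))) ∧
      ¬ (∀ᵐ x ∂(volume.restrict (Ioo (a₁ + a₂ / 2) (b - a₁))), e₁ x = 0) ∧
      (∀ᵐ x ∂(volume.restrict (Ioo (a₁ + a₂ / 2) (b - a₁))),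
        (∫ t in (a₁ + a₂ / 2)..(b - x + a₂ / 2), e₁ t * h (t + x - a₂ / 2)) = e₁ x) := by
  have hpq : a₁ + a₂ / 2 < b - a₁ := by linarith
  set p := a₁ + a₂ / 2
  set q := b - a₁
  have hk : π / (2 * (q - p)) ≠ 0 := (div_pos pi_pos (by linarith)).ne'
  refine ⟨(Ioo (2 * a₁ + a₂ / 2) b).indicator fun _ ↦ π / (2 * (q - p)), quarterCosine p q,
    (memLp_const _).indicator measurableSet_Ioo, ?_,
    .of_forall fun x hx ↦ indicator_of_notMem hx _, memLp_quarterCosine p q 2 _, ?_, ?_⟩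
  · refine not_ae_eq_zero_of_forall_ne (s := Ioo (2 * a₁ + a₂ / 2) b) ?_ fun x hx ↦ ?_
    · simp [Ioo_inter_Ioo, hb, hlt]
    · rwa [indicator_of_mem hx]
  · refine not_ae_eq_zero_of_forall_ne (s := Ioo p q) ?_ fun x hx ↦ (quarterCosine_pos hx).ne'
    simp [hpq]
  · refine ae_restrict_of_forall_mem measurableSet_Ioo fun x hx ↦ ?_
    have h_upper : b - x + a₂ / 2 = p + q - x := by ring
    have h_support : Ioo (2 * a₁ + a₂ / 2) b = Ioo (2 * p - a₂ / 2) (p + q - a₂ / 2) := by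
      congr 1 <;> ring
    rw [h_upper, h_support]
    exact integral_quarterCosine_mul_comp_eq_self hx fun y hy ↦ indicator_of_mem hy _

/-- There exist a nonzero `h ∈ L²(0,π)` vanishing a.e. outside `(2a₁+a₂/2, π)` and a
nonzero `e₁ ∈ L²((a₁+a₂/2, π−a₁))` such that the integral operator `M` built from `h`
satisfies `M(e₁) = e₁` a.e. on `(a₁+a₂/2, π−a₁)`, i.e. `M` has eigenvalue `1` with
eigenfunction `e₁`. -/
theorem M_has_eigenvalue_one (a₁ a₂ : ℝ)
    (ha₁ : π / 3 ≤ a₁) (ha₁' : a₁ < 2 * π / 5)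
    (ha₂ : π / 3 ≤ a₂) (ha₂' : a₂ < 2 * π / 3)
    (ha : a₁ < a₂) (hlt : 2 * a₁ + a₂ / 2 < π) :
    ∃ h e₁ : ℝ → ℝ,
      MemLp h 2 (volume.restrict (Ioo 0 π)) ∧
      ¬ (∀ᵐ x ∂(volume.restrict (Ioo 0 π)), h x = 0) ∧
      (∀ᵐ x ∂(volume : Measure ℝ), x ∉ Ioo (2 * a₁ + a₂ / 2) π → h x = 0) ∧
      MemLp e₁ 2 (volume.restrict (Ioo (a₁ + a₂ / 2) (π - a₁))) ∧
      ¬ (∀ᵐ x ∂(volume.restrict (Ioo (a₁ + a₂ / 2) (π - a₁))), e₁ x = 0) ∧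
      (∀ᵐ x ∂(volume.restrict (Ioo (a₁ + a₂ / 2) (π - a₁))),
        (∫ t in (a₁ + a₂ / 2)..(π - x + a₂ / 2), e₁ t * h (t + x - a₂ / 2)) = e₁ x) :=
  M_has_eigenvalue_one_general a₁ a₂ π pi_pos hlt
end

section
/- For every β ∈ ℂ and a.e. x ∈ (a₁ + a₂/2, π − a₁), the function U(x) := p₂^β(x) − ∫_{x+a₂/2}^{π} p₂^β(t)·q₂^β(t − x + a₂/2) dt vanishes: p₂^β(x) = ∫_{x+a₂/2}^{π} p₂^β(t)·q₂^β(t − x + a₂/2) dt. -/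
open MeasureTheory Real Set Filter

/-!
For `x` in `(a₁ + a₂/2, π - a₁)`, the shift `t ↦ t + x - a₂/2` carries the part of the support of
`q₂` met by the integral into the interval where `p₂` equals `h`, independently of `β`. So the
integral, which looks quadratic in `β`, is linear: it equals `β * M(e₁)(x)`, and the eigenfunction
equation `M(e₁) = e₁` turns it into `β * e₁ x = p₂ x`.
-/

theorem intervalIntegral_eq_of_eqOn_zero {E : Type*} [NormedAddCommGroup E] [NormedSpace ℝ E]
    {μ : Measure ℝ} {f : ℝ → E} {a b c : ℝ} (hf : EqOn f 0 (uIoc a b)) :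
    ∫ t in a..c, f t ∂μ = ∫ t in b..c, f t ∂μ := by
  have hab : IntervalIntegrable f μ a b :=
    (intervalIntegrable_congr hf).mpr IntervalIntegrable.zero
  by_cases hbc : IntervalIntegrable f μ b c
  · have hzero : ∫ t in a..b, f t ∂μ = 0 := by
      rw [intervalIntegral.intervalIntegral_eq_integral_uIoc,
        setIntegral_eq_zero_of_forall_eq_zero hf, smul_zero]
    rw [← intervalIntegral.integral_add_adjacent_intervals hab hbc, hzero, zero_add]
  · rw [intervalIntegral.integral_undef hbc,
      intervalIntegral.integral_undef fun hac ↦ hbc (hab.symm.trans hac)]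

theorem intervalIntegral_mul_comp_sub {A : Type*} [NonUnitalNormedRing A] [NormedSpace ℝ A]
    (f g : ℝ → A) (a b d : ℝ) :
    ∫ t in a..b, f t * g (t - d) = ∫ t in (a - d)..(b - d), f (t + d) * g t := by
  simpa only [sub_add_cancel] using
    intervalIntegral.integral_comp_sub_right (a := a) (b := b) (fun t ↦ f (t + d) * g t) d

section HankelOp

variable {𝕜 : Type*} [NormedField 𝕜] [NormedAlgebra ℝ 𝕜]

/-- The truncated Hankel-type operator with kernel `h (t + x - b)`. The operator `M` of the paper is
the case `b = a₂ / 2`, `c = a₁ + a₂ / 2`, `T = π`. -/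
noncomputable def hankelOp (b c T : ℝ) (h f : ℝ → 𝕜) (x : ℝ) : 𝕜 :=
  ∫ t in c..(T - x + b), f t * h (t + x - b)

theorem hankelOp_ofReal {𝕜 : Type*} [RCLike 𝕜] (b c T : ℝ) (h f : ℝ → ℝ) (x : ℝ) :
    hankelOp b c T (fun t ↦ (h t : 𝕜)) (fun t ↦ (f t : 𝕜)) x =
      ((hankelOp b c T h f x : ℝ) : 𝕜) := by
  simp only [hankelOp, ← RCLike.ofReal_mul, RCLike.intervalIntegral_ofReal]

theorem intervalIntegral_mul_comp_eq_mul_hankelOp {b c T x : ℝ} {β : 𝕜} {p q h e : ℝ → 𝕜}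
    (hx : c ≤ T - x + b) (hp : EqOn p h (Ioo (c + x - b) T))
    (hq : ∀ t ∈ Ioo c (T - x + b), q t = β * e t) (hq_zero : EqOn q 0 (uIoc (2 * b) c)) :
    ∫ t in (x + b)..T, p t * q (t - x + b) = β * hankelOp b c T h e x := by
  calc
    _ = ∫ t in (x + b)..T, p t * q (t - (x - b)) := by simp only [sub_add]
    _ = ∫ t in (2 * b)..(T - x + b), p (t + (x - b)) * q t := by
      rw [intervalIntegral_mul_comp_sub]
      congr 1 <;> ring
    _ = ∫ t in c..(T - x + b), p (t + (x - b)) * q t :=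
      intervalIntegral_eq_of_eqOn_zero fun t ht ↦ by
        simp only [hq_zero ht, Pi.zero_apply, mul_zero]
    _ = ∫ t in c..(T - x + b), β * (e t * h (t + x - b)) := by
      refine intervalIntegral.integral_congr_Ioo_of_le hx fun t ht ↦ ?_
      have hpt : p (t + (x - b)) = h (t + (x - b)) :=
        hp ⟨by linarith [ht.1], by linarith [ht.2]⟩
      simp only [hpt, hq t ht, add_sub_assoc]
      ring
    _ = β * hankelOp b c T h e x := intervalIntegral.integral_const_mul β _

theorem U_vanishes_general {a₁ a₂ T : ℝ} (ha : a₂ / 2 ≤ a₁) (hT : T ≤ 3 * a₁ + a₂ / 2)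
    {h e p q : ℝ → 𝕜} {β : 𝕜}
    (heig : ∀ᵐ x ∂(volume.restrict (Ioo (a₁ + a₂ / 2) (T - a₁))),
      hankelOp (a₂ / 2) (a₁ + a₂ / 2) T h e x = e x)
    (hp : ∀ x, p x =
      if x ∈ Ioo (a₁ + a₂ / 2) (T - a₁) then β * e x
      else if x ∈ Ioo (2 * a₁ + a₂ / 2) T then h x else 0)
    (hq : ∀ x, q x = if x ∈ Ioo (a₁ + a₂ / 2) (T - a₁) then β * e x else 0) :
    ∀ᵐ x ∂(volume.restrict (Ioo (a₁ + a₂ / 2) (T - a₁))),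
      p x = ∫ t in (x + a₂ / 2)..T, p t * q (t - x + a₂ / 2) := by
  filter_upwards [heig, ae_restrict_mem measurableSet_Ioo] with x hMx hx
  have hp_right : EqOn p h (Ioo (a₁ + a₂ / 2 + x - a₂ / 2) T) := fun t ht ↦ by
    have hlow : 2 * a₁ + a₂ / 2 < t := by linarith [hx.1, ht.1]
    have hnot : t ∉ Ioo (a₁ + a₂ / 2) (T - a₁) := fun hmem ↦ by linarith [hmem.2]
    rw [hp, if_neg hnot, if_pos ⟨hlow, ht.2⟩]
  have hq_mid : ∀ t ∈ Ioo (a₁ + a₂ / 2) (T - x + a₂ / 2), q t = β * e t := fun t ht ↦ by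
    rw [hq, if_pos ⟨ht.1, by linarith [hx.1, ht.2]⟩]
  have hq_left : EqOn q 0 (uIoc (2 * (a₂ / 2)) (a₁ + a₂ / 2)) := fun t ht ↦ by
    rw [uIoc_of_le (by linarith)] at ht
    rw [hq, if_neg fun hmem ↦ hmem.1.not_ge ht.2, Pi.zero_apply]
  rw [intervalIntegral_mul_comp_eq_mul_hankelOp (by linarith [hx.2]) hp_right hq_mid hq_left, hMx,
    hp, if_pos hx]

end HankelOp

/-- For every `β ∈ ℂ` and a.e. `x ∈ (a₁+a₂/2, π−a₁)`,
`U(x) := p₂^β(x) − ∫_{x+a₂/2}^{π} p₂^β(t)·q₂^β(t − x + a₂/2) dt` vanishes. -/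
theorem U_vanishes (a₁ a₂ : ℝ)
    (ha₁ : π / 3 ≤ a₁) (ha₁' : a₁ < 2 * π / 5)
    (ha₂ : π / 3 ≤ a₂) (ha₂' : a₂ < 2 * π / 3)
    (ha : a₁ < a₂) (hlt : 2 * a₁ + a₂ / 2 < π)
    (h e₁ : ℝ → ℝ)
    (hh : MemLp h 2 (volume.restrict (Ioo 0 π)))
    (hh0 : ∀ᵐ x ∂(volume : Measure ℝ), x ∉ Ioo (2 * a₁ + a₂ / 2) π → h x = 0)
    (he₁ : MemLp e₁ 2 (volume.restrict (Ioo (a₁ + a₂ / 2) (π - a₁))))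
    (heig : ∀ᵐ x ∂(volume.restrict (Ioo (a₁ + a₂ / 2) (π - a₁))),
      (∫ t in (a₁ + a₂ / 2)..(π - x + a₂ / 2), e₁ t * h (t + x - a₂ / 2)) = e₁ x)
    (p₂ q₂ : ℂ → ℝ → ℂ)
    (hp₂ : ∀ β x, p₂ β x =
      if x ∈ Ioo (a₁ + a₂ / 2) (π - a₁) then β * (e₁ x : ℂ)
      else if x ∈ Ioo (2 * a₁ + a₂ / 2) π then (h x : ℂ) else 0)
    (hq₂ : ∀ β x, q₂ β x =
      if x ∈ Ioo (a₁ + a₂ / 2) (π - a₁) then β * (e₁ x : ℂ) else 0) :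
    ∀ β : ℂ, ∀ᵐ x ∂(volume.restrict (Ioo (a₁ + a₂ / 2) (π - a₁))),
      p₂ β x = ∫ t in (x + a₂ / 2)..π, p₂ β t * q₂ β (t - x + a₂ / 2) :=
  fun β ↦ U_vanishes_general (by linarith) (by linarith)
    (heig.mono fun _ hx ↦ (hankelOp_ofReal ..).trans (congrArg _ hx)) (hp₂ β) (hq₂ β)
end

section
/- Let 0 < a₁ < a₂ < π with 2a₁ + a₂/2 ≥ π. Let f, f̃, g, g̃ ∈ L²(0, π; ℂ) (extended by zero to ℝ) satisfy f = f̃ a.e. on (π − a₂/2, π) and g = g̃ a.e. on (a₁, a₁ + a₂/2). Then for every x > a₁, ∫_{x+a₁}^{π} f(t)·g(t − x) dt = ∫_{x+a₁}^{π} f̃(t)·g̃(t − x) dt. (That is, the integral α¹[f,g](x) for x > a₁ is determined by the values of f on (π−a₂/2, π) and of g on (a₁, a₁+a₂/2).) -/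
open MeasureTheory Real Set Filter

/-!
For `x ≥ a₁` and `x + a₁ < t < π`, the condition `π ≤ 2a₁ + a₂/2` gives
`t > 2a₁ ≥ π - a₂/2` and `a₁ < t - x < π - a₁ ≤ a₁ + a₂/2`, so the integrand only sees
values of `f` and `g` on the two windows where they are known. If `x + a₁ > π`, the
integration interval is reversed and lies beyond `π`, where `f` and `f'` vanish.
-/

theorem ae_mul_comp_sub_right_eq {R : Type*} [Mul R] {f f' g g' : ℝ → R} {a b x : ℝ}
    (hf : ∀ᵐ t, t ∈ Ioo (x + a) b → f t = f' t)
    (hg : ∀ᵐ t, t ∈ Ioo a (b - x) → g t = g' t) :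
    ∀ᵐ t, t ∈ Ioo (x + a) b → f t * g (t - x) = f' t * g' (t - x) := by
  have hg_shift : ∀ᵐ t, t - x ∈ Ioo a (b - x) → g (t - x) = g' (t - x) :=
    (measurePreserving_sub_right volume x).quasiMeasurePreserving.ae hg
  filter_upwards [hf, hg_shift] with t hft hgt ht
  rw [hft ht, hgt ⟨lt_sub_iff_add_lt'.2 ht.1, sub_lt_sub_right ht.2 x⟩]

theorem ae_uIoc_mul_comp_sub_right_eq {R : Type*} [MulZeroClass R] {f f' g g' : ℝ → R}
    {a b x : ℝ} (hf₀ : ∀ t, b ≤ t → f t = 0) (hf₀' : ∀ t, b ≤ t → f' t = 0)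
    (hf : ∀ᵐ t, t ∈ Ioo (x + a) b → f t = f' t)
    (hg : ∀ᵐ t, t ∈ Ioo a (b - x) → g t = g' t) :
    ∀ᵐ t, t ∈ uIoc (x + a) b → f t * g (t - x) = f' t * g' (t - x) := by
  filter_upwards [ae_mul_comp_sub_right_eq hf hg] with t h_eq ht
  rcases lt_or_ge t b with htb | hbt
  · exact h_eq ⟨(min_lt_iff.1 ht.1).resolve_right htb.not_gt, htb⟩
  · rw [hf₀ t hbt, hf₀' t hbt, zero_mul, zero_mul]

-- About the integrands rather than the integrals, since `∫` is `0` on a non-integrable product.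
theorem alpha1_determined_general {R : Type*} [MulZeroClass R] {a₁ a₂ b : ℝ}
    (hb : b ≤ 2 * a₁ + a₂ / 2) {f f' g g' : ℝ → R}
    (hf₀ : ∀ t, b ≤ t → f t = 0) (hf₀' : ∀ t, b ≤ t → f' t = 0)
    (hf : ∀ᵐ t, t ∈ Ioo (b - a₂ / 2) b → f t = f' t)
    (hg : ∀ᵐ t, t ∈ Ioo a₁ (a₁ + a₂ / 2) → g t = g' t) {x : ℝ} (hx : a₁ ≤ x) :
    ∀ᵐ t, t ∈ uIoc (x + a₁) b → f t * g (t - x) = f' t * g' (t - x) := by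
  have hf_window : Ioo (x + a₁) b ⊆ Ioo (b - a₂ / 2) b := Ioo_subset_Ioo_left (by linarith)
  have hg_window : Ioo a₁ (b - x) ⊆ Ioo a₁ (a₁ + a₂ / 2) := Ioo_subset_Ioo_right (by linarith)
  exact ae_uIoc_mul_comp_sub_right_eq hf₀ hf₀'
    (hf.mono fun _ h ht => h (hf_window ht)) (hg.mono fun _ h ht => h (hg_window ht))

/-- For `0 < a₁ < a₂ < π` with `2a₁ + a₂/2 ≥ π`: if `f = f̃` a.e. on `(π−a₂/2, π)` and
`g = g̃` a.e. on `(a₁, a₁+a₂/2)`, then for every `x > a₁`,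
`∫_{x+a₁}^{π} f(t)·g(t−x) dt = ∫_{x+a₁}^{π} f̃(t)·g̃(t−x) dt`. -/
theorem alpha1_determined (a₁ a₂ : ℝ)
    (ha₁ : 0 < a₁) (ha : a₁ < a₂) (ha₂ : a₂ < π)
    (hge : π ≤ 2 * a₁ + a₂ / 2)
    (f f' g g' : ℝ → ℂ)
    (hf : MemLp f 2 (volume.restrict (Ioo 0 π)))
    (hf' : MemLp f' 2 (volume.restrict (Ioo 0 π)))
    (hg : MemLp g 2 (volume.restrict (Ioo 0 π)))
    (hg' : MemLp g' 2 (volume.restrict (Ioo 0 π)))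
    (hfe : ∀ x, x ∉ Ioo 0 π → f x = 0) (hfe' : ∀ x, x ∉ Ioo 0 π → f' x = 0)
    (hge' : ∀ x, x ∉ Ioo 0 π → g x = 0) (hge'' : ∀ x, x ∉ Ioo 0 π → g' x = 0)
    (hff : ∀ᵐ t ∂(volume : Measure ℝ), t ∈ Ioo (π - a₂ / 2) π → f t = f' t)
    (hgg : ∀ᵐ t ∂(volume : Measure ℝ), t ∈ Ioo a₁ (a₁ + a₂ / 2) → g t = g' t) :
    ∀ x : ℝ, a₁ < x →
      (∫ t in (x + a₁)..π, f t * g (t - x)) = ∫ t in (x + a₁)..π, f' t * g' (t - x) := by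
  exact fun x hx => intervalIntegral.integral_congr_ae <|
    alpha1_determined_general hge (fun t ht => hfe t fun h => ht.not_gt h.2)
      (fun t ht => hfe' t fun h => ht.not_gt h.2) hff hgg hx.le
end
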